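/- arXiv:1411.1140 — 2 statements merged into one kernel-verified Lean document; each statement's English description precedes it below -/
import Mathlib

section
/- Let K be a field complete with respect to a non-Archimedean norm, let A be a commutative K-algebra which is finitely generated as a K-algebra, and let G be a finite group acting on A by K-algebra automorphisms. Let B be the subalgebra of G-invariant elements of A. Then every multiplicative seminorm y on B extending the norm of K extends to A: there exists a multiplicative seminorm x on A extending the norm of K with x(b) = y(b) for every b ∈ B. -/
/-!
A multiplicative seminorm on `B` is the pullback of a norm along a ring homomorphism `φ : B →+* E`
to a complete field: take the completion of the residue field at the prime ideal on which the
seminorm vanishes. If the seminorm is at most `1` on the natural numbers, then `E` is ultrametric,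
and the spectral norm carries its norm to its algebraic closure. For `A` integral over `B`, lying
over extends `φ` to a homomorphism from `A` to this algebraic closure, along which the spectral norm
pulls back to the required seminorm. The ring `A` is integral over its `G`-invariants because `a` is
a root of `∏ g, (X - g • a)`.
-/

/-- The subalgebra of `G`-invariant elements of a `K`-algebra `A`, for a group
`G` acting on `A` by `K`-algebra automorphisms. -/
def invariantSubalgebra (K A G : Type*) [CommSemiring K] [Semiring A] [Algebra K A]
    [Monoid G] [MulSemiringAction G A]
    (hGK : ∀ (g : G) (k : K), g • (algebraMap K A k) = algebraMap K A k) :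
    Subalgebra K A where
  carrier := {a | ∀ g : G, g • a = a}
  mul_mem' := fun {a b} ha hb g => by rw [smul_mul', ha g, hb g]
  add_mem' := fun {a b} ha hb g => by rw [smul_add, ha g, hb g]
  algebraMap_mem' := fun k g => hGK g k

/-- The restriction of a multiplicative seminorm along a ring homomorphism. -/
def MulRingSeminorm.comp {A S : Type*} [Ring A] [Ring S] (x : MulRingSeminorm A)
    (f : S →+* A) : MulRingSeminorm S where
  toFun s := x (f s)
  map_zero' := by simp
  add_le' r s := by simpa using map_add_le_add x (f r) (f s)
  neg' r := by simp [map_neg f, map_neg_eq_map x]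
  map_one' := by simp
  map_mul' r s := by simp

theorem exists_absoluteValue_isFractionRing_extends {R S : Type*} [CommRing R] [IsDomain R]
    [Field S] [LinearOrder S] [IsStrictOrderedRing S] (v : AbsoluteValue R S)
    (F : Type*) [Field F] [Algebra R F] [IsFractionRing R F] :
    ∃ w : AbsoluteValue F S, ∀ r, w (algebraMap R F r) = v r := by
  have isUnit_apply (r : nonZeroDivisors R) : IsUnit (v.toMonoidWithZeroHom r) :=
    (v.ne_zero (nonZeroDivisors.coe_ne_zero r)).isUnit
  let w : F →*₀ S :=
    (IsLocalization.toLocalizationMap (nonZeroDivisors R) F).lift₀ v.toMonoidWithZeroHom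
      isUnit_apply
  have w_algebraMap (r : R) : w (algebraMap R F r) = v r :=
    Submonoid.LocalizationMap.lift_eq _ isUnit_apply r
  have w_nonneg (x : F) : 0 ≤ w x := by
    obtain ⟨a, b, -, rfl⟩ := IsFractionRing.div_surjective (A := R) x
    rw [map_div₀, w_algebraMap, w_algebraMap]
    exact div_nonneg (v.nonneg a) (v.nonneg b)
  have w_add_le (x y : F) : w (x + y) ≤ w x + w y := by
    obtain ⟨a, b, hb, rfl⟩ := IsFractionRing.div_surjective (A := R) x
    obtain ⟨c, d, hd, rfl⟩ := IsFractionRing.div_surjective (A := R) y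
    have hb' : algebraMap R F b ≠ 0 := IsFractionRing.to_map_ne_zero_of_mem_nonZeroDivisors hb
    have hd' : algebraMap R F d ≠ 0 := IsFractionRing.to_map_ne_zero_of_mem_nonZeroDivisors hd
    have hvb : 0 < v b := v.pos (nonZeroDivisors.ne_zero hb)
    have hvd : 0 < v d := v.pos (nonZeroDivisors.ne_zero hd)
    rw [div_add_div _ _ hb' hd']
    simp only [← map_mul, ← map_add, map_div₀, w_algebraMap]
    rw [div_add_div _ _ hvb.ne' hvd.ne', ← map_mul, ← map_mul, ← map_mul]
    gcongr
    exact v.add_le _ _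
  exact ⟨{ toFun := w
           map_mul' := map_mul w
           nonneg' := w_nonneg
           eq_zero' := fun _ => map_eq_zero w
           add_le' := w_add_le }, w_algebraMap⟩

section Seminorm

variable {B : Type*} [CommRing B] (y : MulRingSeminorm B)

/-- The kernel of a multiplicative seminorm: the prime ideal of elements on which it vanishes. -/
def seminormKer : Ideal B where
  carrier := {b | y b = 0}
  zero_mem' := map_zero y
  add_mem' {a b} ha hb :=
    le_antisymm ((map_add_le_add y a b).trans_eq (by rw [ha, hb, add_zero])) (apply_nonneg y _)
  smul_mem' c b hb := by
    change y (c * b) = 0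
    rw [map_mul, hb, mul_zero]

theorem mem_seminormKer {b : B} : b ∈ seminormKer y ↔ y b = 0 :=
  Iff.rfl

instance isPrime_seminormKer : (seminormKer y).IsPrime where
  ne_top' := (Ideal.ne_top_iff_one _).2 (by simp [mem_seminormKer])
  mem_or_mem' {a b} hab := by simpa [mem_seminormKer] using hab

theorem seminorm_eq_of_sub_mem_seminormKer {a b : B} (hab : a - b ∈ seminormKer y) :
    y a = y b :=
  sub_eq_zero.1 (abs_nonpos_iff.1 ((abs_sub_map_le_sub y a b).trans_eq hab))

/-- The absolute value through which a multiplicative seminorm factors on the quotient by its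
kernel. -/
def quotientAbsoluteValue : AbsoluteValue (B ⧸ seminormKer y) ℝ where
  toFun := Quotient.lift y fun _ _ h =>
    seminorm_eq_of_sub_mem_seminormKer y ((Submodule.quotientRel_def _).1 h)
  map_mul' := by
    rintro ⟨a⟩ ⟨b⟩
    exact map_mul y a b
  nonneg' := by
    rintro ⟨a⟩
    exact apply_nonneg y a
  eq_zero' := by
    rintro ⟨a⟩
    exact (mem_seminormKer y).symm.trans Ideal.Quotient.eq_zero_iff_mem.symm
  add_le' := by
    rintro ⟨a⟩ ⟨b⟩
    exact map_add_le_add y a b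

theorem quotientAbsoluteValue_mk (b : B) :
    quotientAbsoluteValue y (Ideal.Quotient.mk (seminormKer y) b) = y b :=
  rfl

end Seminorm

theorem exists_ringHom_completeSpace_norm_eq.{u} {B : Type u} [CommRing B]
    (y : MulRingSeminorm B) :
    ∃ (E : Type u) (_ : NormedField E) (_ : CompleteSpace E) (φ : B →+* E),
      ∀ b, ‖φ b‖ = y b := by
  obtain ⟨w, hw⟩ := exists_absoluteValue_isFractionRing_extends (quotientAbsoluteValue y)
    (FractionRing (B ⧸ seminormKer y))
  let ψ : B →+* FractionRing (B ⧸ seminormKer y) :=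
    (algebraMap (B ⧸ seminormKer y) _).comp (Ideal.Quotient.mk (seminormKer y))
  refine ⟨w.Completion, inferInstance, inferInstance,
    UniformSpace.Completion.coeRingHom.comp ((WithAbs.equiv w).symm.toRingHom.comp ψ),
    fun b => ?_⟩
  calc ‖((WithAbs.toAbs w (ψ b) : WithAbs w) : w.Completion)‖
      = w (ψ b) := UniformSpace.Completion.norm_coe _
    _ = y b := (hw _).trans (quotientAbsoluteValue_mk y b)

theorem exists_mulRingSeminorm_extends_norm (E L : Type*) [NormedField E] [CompleteSpace E]
    [IsUltrametricDist E] [Field L] [Algebra E L] [Algebra.IsAlgebraic E L] :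
    ∃ x : MulRingSeminorm L, ∀ e : E, x (algebraMap E L e) = ‖e‖ := by
  classical
  by_cases nontrivial_norm : ∃ e : E, e ≠ 0 ∧ ‖e‖ ≠ 1
  · let _ : NontriviallyNormedField E := .ofNormNeOne nontrivial_norm
    exact ⟨(spectralMulAlgNorm E L).toMulRingSeminorm, spectralNorm_extends⟩
  · push Not at nontrivial_norm
    refine ⟨1, fun e => ?_⟩
    rcases eq_or_ne e 0 with rfl | he
    · simp
    · simp [he, nontrivial_norm e he]

theorem exists_ringHom_comp_algebraMap_eq_of_isIntegral {B A M : Type*} [CommRing B] [CommRing A]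
    [Algebra B A] [Algebra.IsIntegral B A] [Field M] [IsAlgClosed M] (φ : B →+* M)
    (hφ : RingHom.ker (algebraMap B A) ≤ RingHom.ker φ) :
    ∃ ψ : A →+* M, ψ.comp (algebraMap B A) = φ := by
  have : (RingHom.ker φ).IsPrime := RingHom.ker_isPrime φ
  obtain ⟨q, -, _, hq⟩ := Ideal.exists_ideal_over_prime_of_isIntegral (RingHom.ker φ)
    (⊥ : Ideal A) hφ
  have : q.LiesOver (RingHom.ker φ) := ⟨hq.symm⟩
  let _ : Algebra (B ⧸ RingHom.ker φ) M := (RingHom.kerLift φ).toAlgebra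
  have : FaithfulSMul (B ⧸ RingHom.ker φ) M :=
    (faithfulSMul_iff_algebraMap_injective _ _).2 (RingHom.kerLift_injective φ)
  have : Module.IsTorsionFree (B ⧸ RingHom.ker φ) M := .trans_faithfulSMul _ M M
  have : Module.IsTorsionFree (B ⧸ RingHom.ker φ) (A ⧸ q) := .trans_faithfulSMul _ (A ⧸ q) (A ⧸ q)
  let f : A ⧸ q →ₐ[B ⧸ RingHom.ker φ] M := IsAlgClosed.lift
  exact ⟨f.toRingHom.comp (Ideal.Quotient.mk q),
    RingHom.ext fun b => f.commutes (Ideal.Quotient.mk _ b)⟩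

theorem seminorm_on_invariants_extends_general {B A : Type*} [CommRing B] [CommRing A]
    [Algebra B A] [Algebra.IsIntegral B A] (y : MulRingSeminorm B)
    (hker : RingHom.ker (algebraMap B A) ≤ seminormKer y) (hnat : ∀ n : ℕ, y n ≤ 1) :
    ∃ x : MulRingSeminorm A, ∀ b, x (algebraMap B A b) = y b := by
  obtain ⟨E, _, _, φ, norm_φ⟩ := exists_ringHom_completeSpace_norm_eq y
  have : IsUltrametricDist E :=
    IsUltrametricDist.isUltrametricDist_of_forall_norm_natCast_le_one fun n => by
      simpa only [← norm_φ, map_natCast] using hnat n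
  have ker_le : RingHom.ker (algebraMap B A) ≤
      RingHom.ker ((algebraMap E (AlgebraicClosure E)).comp φ) := fun b hb => by
    have norm_φ_b : ‖φ b‖ = 0 := (norm_φ b).trans (hker hb)
    simp [RingHom.mem_ker, norm_eq_zero.1 norm_φ_b]
  obtain ⟨ψ, hψ⟩ := exists_ringHom_comp_algebraMap_eq_of_isIntegral _ ker_le
  obtain ⟨x, hx⟩ := exists_mulRingSeminorm_extends_norm E (AlgebraicClosure E)
  refine ⟨x.comp ψ, fun b => ?_⟩
  calc x (ψ (algebraMap B A b)) = x (algebraMap E _ (φ b)) := congrArg x (RingHom.congr_fun hψ b)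
    _ = y b := (hx _).trans (norm_φ b)

theorem mulRingSeminorm_natCast_le_one_of_norm_extends {K B : Type*} [NormedField K] [Ring B]
    [Algebra K B] (hna : IsNonarchimedean (norm : K → ℝ)) (y : MulRingSeminorm B)
    (hy : ∀ k : K, y (algebraMap K B k) = ‖k‖) (n : ℕ) : y n ≤ 1 := by
  rw [← map_natCast (algebraMap K B), hy]
  exact IsNonarchimedean.apply_natCast_le_one (f := NormedField.toAbsoluteValue K) hna

instance isIntegral_invariantSubalgebra (K A G : Type*) [CommRing K] [CommRing A] [Algebra K A]
    [Group G] [Finite G] [MulSemiringAction G A]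
    (hGK : ∀ (g : G) (k : K), g • (algebraMap K A k) = algebraMap K A k) :
    Algebra.IsIntegral (invariantSubalgebra K A G hGK) A :=
  have : Algebra.IsInvariant (invariantSubalgebra K A G hGK) A G := ⟨fun a ha => ⟨⟨a, ha⟩, rfl⟩⟩
  Algebra.IsInvariant.isIntegral _ A G

/-- Let `K` be a field complete with respect to a non-Archimedean norm, `A` a
finitely generated commutative `K`-algebra, `G` a finite group acting on `A`
by `K`-algebra automorphisms, and `B` the subalgebra of `G`-invariant
elements.  Then every multiplicative seminorm on `B` extending the norm of `K`
extends to a multiplicative seminorm on `A` extending the norm of `K`. -/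
theorem seminorm_on_invariants_extends
    (K : Type*) [NormedField K] [CompleteSpace K]
    (hna : ∀ k k' : K, ‖k + k'‖ ≤ max ‖k‖ ‖k'‖)
    (A : Type*) [CommRing A] [Algebra K A] (hfg : Algebra.FiniteType K A)
    (G : Type*) [Group G] [Finite G] [MulSemiringAction G A]
    (hGK : ∀ (g : G) (k : K), g • (algebraMap K A k) = algebraMap K A k)
    (y : MulRingSeminorm (invariantSubalgebra K A G hGK))
    (hy : ∀ k : K, y (algebraMap K (invariantSubalgebra K A G hGK) k) = ‖k‖) :
    ∃ x : MulRingSeminorm A, (∀ k : K, x (algebraMap K A k) = ‖k‖) ∧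
      ∀ b : invariantSubalgebra K A G hGK, x (b : A) = y b := by
  obtain ⟨x, hx⟩ := seminorm_on_invariants_extends_general (A := A) y
    (fun b hb => (Subtype.ext hb : b = 0) ▸ map_zero y)
    (mulRingSeminorm_natCast_le_one_of_norm_extends hna y hy)
  exact ⟨x, fun k => (hx (algebraMap K _ k)).trans (hy k), hx⟩
end

section
/- Let K be a field complete with respect to a non-Archimedean norm, let A be a commutative K-algebra which is finitely generated as a K-algebra, let G be a finite group acting on A by K-algebra automorphisms, and let B be the subalgebra of G-invariant elements of A. Then restriction of seminorms from A to B induces a bijection between the set of G-orbits of multiplicative seminorms on A extending the norm of K (where G acts by (g • x)(a) = x(g⁻¹ • a)) and the set of multiplicative seminorms on B extending the norm of K. -/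
/-!
A multiplicative seminorm extending an ultrametric norm is bounded by `1` on the natural numbers,
hence is ultrametric, i.e. a valuation with values in `ℝ≥0`.

A valuation of `B` extends to `A` because it factors through the residue field at its support, over
which the residue field of a prime of `A` above is algebraic; there the extension comes from the
spectral norm on an algebraic closure of the completion.

Let `v` and `w` be valuations of `A` agreeing on `B`. The coefficients of `∏ g, (X - C (g • a))`
are `G`-invariant, so `v` and `w` agree on them. If `w a ≠ v (g • a)` for every `g`, each factor has
a unique dominant term at radius `w a`, hence so does the product; then `w` cannot vanish on its
value at `a`, which is `0`. So `w a = v (g • a)` for some `g` depending on `a`. A pigeonhole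
argument on the elements `b ^ n * c` makes `g` uniform over all `a` outside the support of `w`,
and incomparability of primes over the same prime of `B` then identifies the supports.
-/

section Nonarchimedean

open scoped NNReal

theorem le_of_forall_pow_le_add_one_mul_pow {s M : ℝ} (hM : 0 ≤ M)
    (h : ∀ m : ℕ, s ^ m ≤ (m + 1) * M ^ m) : s ≤ M := by
  by_contra! hlt
  obtain ⟨r, hMr, hrs⟩ := exists_between hlt
  have hr : 0 < r := hM.trans_lt hMr
  obtain ⟨m, hm⟩ := Real.exists_natCast_add_one_lt_pow_of_one_lt ((one_lt_div hr).mpr hrs)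
  rw [div_pow, lt_div_iff₀ (pow_pos hr m)] at hm
  refine hm.not_ge ((h m).trans ?_)
  gcongr

variable {R : Type*} [CommRing R]

theorem isNonarchimedean_of_forall_natCast_le_one {x : MulRingSeminorm R}
    (hx : ∀ n : ℕ, x n ≤ 1) : IsNonarchimedean x := by
  intro a b
  set M := max (x a) (x b)
  have hM : 0 ≤ M := (apply_nonneg x a).trans (le_max_left _ _)
  have binomial_term_le : ∀ m, ∀ i ∈ Finset.range (m + 1),
      x (a ^ i * b ^ (m - i) * m.choose i) ≤ M ^ m := fun m i hi => by
    calc x (a ^ i * b ^ (m - i) * m.choose i)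
        = x a ^ i * x b ^ (m - i) * x (m.choose i) := by simp only [map_mul, map_pow]
      _ ≤ M ^ i * M ^ (m - i) * 1 := by
          gcongr
          exacts [le_max_left _ _, le_max_right _ _, hx _]
      _ = M ^ m := by rw [mul_one, pow_mul_pow_sub M (Finset.mem_range_succ_iff.mp hi)]
  refine le_of_forall_pow_le_add_one_mul_pow hM fun m => ?_
  calc x (a + b) ^ m
      = x (∑ i ∈ Finset.range (m + 1), a ^ i * b ^ (m - i) * m.choose i) := by
        rw [← map_pow, add_pow]
    _ ≤ ∑ i ∈ Finset.range (m + 1), x (a ^ i * b ^ (m - i) * m.choose i) :=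
        Finset.le_sum_of_subadditive x (map_zero x).le (map_add_le_add x) _ _
    _ ≤ (Finset.range (m + 1)).card • M ^ m := Finset.sum_le_card_nsmul _ _ _ (binomial_term_le m)
    _ = (m + 1) * M ^ m := by rw [Finset.card_range, nsmul_eq_mul, Nat.cast_add_one]

theorem isNonarchimedean_of_extends_norm {K : Type*} [SeminormedCommRing K]
    [IsUltrametricDist K] [Algebra K R] {x : MulRingSeminorm R}
    (hx : ∀ k : K, x (algebraMap K R k) = ‖k‖) : IsNonarchimedean x := by
  have : NormOneClass K := ⟨by rw [← hx, map_one, map_one]⟩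
  refine isNonarchimedean_of_forall_natCast_le_one fun n => ?_
  rw [← map_natCast (algebraMap K R), hx]
  exact IsUltrametricDist.norm_natCast_le_one K n

/-- A nonarchimedean multiplicative seminorm, as a valuation with values in `ℝ≥0`. -/
noncomputable def valuationOfIsNonarchimedean {x : MulRingSeminorm R} (hx : IsNonarchimedean x) :
    Valuation R ℝ≥0 where
  toFun a := ⟨x a, apply_nonneg x a⟩
  map_zero' := Subtype.ext (map_zero x)
  map_one' := Subtype.ext (map_one x)
  map_mul' a b := Subtype.ext (map_mul x a b)
  map_add_le_max' := hx

/-- The inverse of `valuationOfIsNonarchimedean`: an `ℝ≥0`-valued valuation, as a multiplicative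
seminorm. -/
noncomputable def mulRingSeminormOfValuation (v : Valuation R ℝ≥0) : MulRingSeminorm R where
  toFun a := v a
  map_zero' := by rw [map_zero, NNReal.coe_zero]
  add_le' a b := NNReal.coe_le_coe.mpr
    ((v.map_add a b).trans (max_le_add_of_nonneg zero_le zero_le))
  neg' a := by rw [v.map_neg]
  map_one' := by rw [map_one, NNReal.coe_one]
  map_mul' a b := by rw [map_mul, NNReal.coe_mul]

end Nonarchimedean

section Extension

open scoped NNReal
open UniformSpace (Completion)

/-- The spectral norm of an algebraic extension of a complete nonarchimedean field, as a
valuation. -/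
noncomputable def spectralValuation (K L : Type*) [NontriviallyNormedField K] [CompleteSpace K]
    [IsUltrametricDist K] [Field L] [Algebra K L] [Algebra.IsAlgebraic K L] : Valuation L ℝ≥0 where
  toFun x := ⟨spectralNorm K L x, spectralNorm_nonneg x⟩
  map_zero' := Subtype.ext spectralNorm_zero
  map_one' := Subtype.ext spectralNorm_one
  map_mul' x y := Subtype.ext (map_mul (spectralMulAlgNorm K L) x y)
  map_add_le_max' x y := isNonarchimedean_spectralNorm x y

theorem spectralValuation_algebraMap {K : Type*} (L : Type*) [NontriviallyNormedField K]
    [CompleteSpace K] [IsUltrametricDist K] [Field L] [Algebra K L] [Algebra.IsAlgebraic K L]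
    (k : K) : spectralValuation K L (algebraMap K L k) = ‖k‖₊ :=
  Subtype.ext (spectralNorm_extends k)

theorem isUltrametricDist_completion (K : Type*) [NormedField K] [IsUltrametricDist K] :
    IsUltrametricDist (Completion K) := by
  refine IsUltrametricDist.isUltrametricDist_of_forall_norm_natCast_le_one fun n => ?_
  rw [← map_natCast (Completion.coeRingHom (α := K)) n]
  exact (Completion.norm_coe (n : K)).trans_le (IsUltrametricDist.norm_natCast_le_one K n)

theorem exists_valuation_extending_nnnorm (K L : Type*) [NormedField K] [IsUltrametricDist K]
    [Field L] [Algebra K L] [Algebra.IsAlgebraic K L] :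
    ∃ w : Valuation L ℝ≥0, ∀ k, w (algebraMap K L k) = ‖k‖₊ := by
  classical
  by_cases htriv : ∀ k : K, k ≠ 0 → ‖k‖₊ = 1
  · refine ⟨1, fun k => ?_⟩
    rcases eq_or_ne k 0 with rfl | hk
    · simp
    · rw [htriv k hk, Valuation.one_apply_of_ne_zero ((map_ne_zero _).mpr hk)]
  · push Not at htriv
    obtain ⟨k₀, hk₀, hnorm⟩ := htriv
    have := isUltrametricDist_completion K
    let : NontriviallyNormedField (Completion K) :=
      NontriviallyNormedField.ofNormNeOne
        ⟨(k₀ : Completion K), by simpa, by simpa [← NNReal.coe_inj] using hnorm⟩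
    let φ : L →ₐ[K] AlgebraicClosure (Completion K) := IsAlgClosed.lift
    refine ⟨(spectralValuation (Completion K) _).comap φ.toRingHom, fun k => ?_⟩
    rw [Valuation.comap_apply, AlgHom.toRingHom_eq_coe, RingHom.coe_coe, φ.commutes,
      IsScalarTower.algebraMap_apply K (Completion K), spectralValuation_algebraMap]
    exact NNReal.eq (Completion.norm_coe k)

theorem exists_comap_algebraMap_eq_of_isAlgebraic {F : Type*} (L : Type*) [Field F] [Field L]
    [Algebra F L] [Algebra.IsAlgebraic F L] (v : Valuation F ℝ≥0) :
    ∃ w : Valuation L ℝ≥0, w.comap (algebraMap F L) = v := by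
  let absv : AbsoluteValue F ℝ :=
    { toFun := fun a => v a
      map_mul' := fun a b => by rw [map_mul, NNReal.coe_mul]
      nonneg' := fun a => NNReal.coe_nonneg _
      eq_zero' := fun a => by rw [NNReal.coe_eq_zero, v.zero_iff]
      add_le' := map_add_le_add (mulRingSeminormOfValuation v) }
  let : NormedField F := absv.toNormedField
  have : IsUltrametricDist F :=
    IsUltrametricDist.isUltrametricDist_of_forall_norm_add_le_max_norm v.map_add
  obtain ⟨w, hw⟩ := exists_valuation_extending_nnnorm F L
  exact ⟨w, Valuation.ext fun a => (hw a).trans (NNReal.eq rfl)⟩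

theorem exists_comap_residueField_eq {B Γ₀ : Type*} [CommRing B]
    [LinearOrderedCommGroupWithZero Γ₀] (v : Valuation B Γ₀) :
    ∃ u : Valuation v.supp.ResidueField Γ₀, u.comap (algebraMap B v.supp.ResidueField) = v := by
  have hreg : nonZeroDivisors (B ⧸ v.supp) ≤ (v.onQuot le_rfl).supp.primeCompl := by
    intro b hb hsupp
    rw [Valuation.supp_quot_supp] at hsupp
    exact nonZeroDivisors.ne_zero hb hsupp
  refine ⟨(v.onQuot le_rfl).extendToLocalization hreg v.supp.ResidueField,
    Valuation.ext fun b => ?_⟩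
  exact (v.onQuot le_rfl).extendToLocalization_apply_map_apply hreg _ (Ideal.Quotient.mk _ b)

theorem exists_comap_algebraMap_eq_of_ker_le_supp {A B : Type*} [CommRing A] [CommRing B]
    [Algebra B A] [Algebra.IsIntegral B A] {v : Valuation B ℝ≥0}
    (hker : RingHom.ker (algebraMap B A) ≤ v.supp) :
    ∃ w : Valuation A ℝ≥0, w.comap (algebraMap B A) = v := by
  obtain ⟨Q, -, _, hQ⟩ := Ideal.exists_ideal_over_prime_of_isIntegral v.supp (⊥ : Ideal A) hker
  have : Q.LiesOver v.supp := ⟨hQ.symm⟩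
  let := Localization.AtPrime.algebraOfLiesOver v.supp Q
  obtain ⟨u, hu⟩ := exists_comap_residueField_eq v
  obtain ⟨w, hw⟩ := exists_comap_algebraMap_eq_of_isAlgebraic Q.ResidueField u
  refine ⟨w.comap (algebraMap A Q.ResidueField), ?_⟩
  rw [← hu, ← hw, ← Valuation.comap_comp, ← Valuation.comap_comp,
    ← IsScalarTower.algebraMap_eq, ← IsScalarTower.algebraMap_eq]

end Extension

section DominantTerm

open Polynomial

variable {A Γ₀ : Type*} [CommRing A] [LinearOrderedCommGroupWithZero Γ₀]

/-- The term of degree `k` of `P` is dominant at radius `r` if it is the only one attaining the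
Gauss norm of `P` of radius `r`; this prevents `P` from having a root of absolute value `r`. -/
def IsDominantTerm (v : Valuation A Γ₀) (r : Γ₀) (P : A[X]) (k : ℕ) : Prop :=
  ∀ j, j ≠ k → v (P.coeff j) * r ^ j < v (P.coeff k) * r ^ k

namespace IsDominantTerm

variable {v : Valuation A Γ₀} {r : Γ₀} {P Q : A[X]} {k l : ℕ}

theorem pos (hk : IsDominantTerm v r P k) : 0 < v (P.coeff k) * r ^ k :=
  zero_le.trans_lt (hk (k + 1) k.succ_ne_self)

theorem le (hk : IsDominantTerm v r P k) (j : ℕ) :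
    v (P.coeff j) * r ^ j ≤ v (P.coeff k) * r ^ k := by
  rcases eq_or_ne j k with rfl | hj
  exacts [le_rfl, (hk j hj).le]

theorem cross_term_lt (hk : IsDominantTerm v r P k) (hl : IsDominantTerm v r Q l) {i j : ℕ}
    (hij : (i, j) ≠ (k, l)) :
    v (P.coeff i * Q.coeff j) * r ^ (i + j) < v (P.coeff k * Q.coeff l) * r ^ (k + l) := by
  simp only [map_mul, pow_add, mul_mul_mul_comm _ _ (r ^ _)]
  by_cases hi : i = k
  · subst hi
    exact mul_lt_mul_of_pos_left (hl j fun hj => hij (by rw [hj])) hk.pos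
  · exact mul_lt_mul_of_lt_of_le_of_nonneg_of_pos (hk i hi) (hl.le j) zero_le hl.pos

theorem mul (hr : r ≠ 0) (hk : IsDominantTerm v r P k) (hl : IsDominantTerm v r Q l) :
    IsDominantTerm v r (P * Q) (k + l) := by
  have hpow : ∀ n, 0 < r ^ n := pow_pos (zero_lt_iff.mpr hr)
  have top_coeff : v ((P * Q).coeff (k + l)) = v (P.coeff k * Q.coeff l) := by
    rw [coeff_mul]
    refine v.map_sum_eq_of_lt (j := (k, l)) (by simp) fun ⟨i, j⟩ hij => ?_
    obtain ⟨hsum, hne⟩ := Finset.mem_sdiff.mp hij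
    have hlt := hk.cross_term_lt hl (i := i) (j := j) (by simpa using hne)
    rw [Finset.HasAntidiagonal.mem_antidiagonal.mp hsum] at hlt
    exact (mul_lt_mul_iff_left₀ (hpow _)).mp hlt
  have top_pos : 0 < v (P.coeff k * Q.coeff l) * r ^ (k + l) :=
    zero_le.trans_lt (hk.cross_term_lt hl (i := k + 1) (j := l) (by simp))
  intro n hn
  rw [top_coeff, ← lt_div_iff₀ (hpow n), coeff_mul]
  refine v.map_sum_lt' (div_pos top_pos (hpow n)) fun ⟨i, j⟩ hij => ?_
  obtain rfl := Finset.HasAntidiagonal.mem_antidiagonal.mp hij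
  rw [lt_div_iff₀ (hpow _)]
  refine hk.cross_term_lt hl fun h => hn ?_
  rw [(Prod.ext_iff.mp h).1, (Prod.ext_iff.mp h).2]

theorem map_eval_ne_zero (hk : IsDominantTerm v r P k) {w : Valuation A Γ₀} {a : A}
    (ha : w a = r) (hcoeff : ∀ j, w (P.coeff j) = v (P.coeff j)) : w (P.eval a) ≠ 0 := by
  have map_term : ∀ j, w (P.coeff j * a ^ j) = v (P.coeff j) * r ^ j := fun j => by
    rw [map_mul, map_pow, hcoeff, ha]
  have mem_range : k ∈ Finset.range (P.natDegree + 1) := by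
    refine Finset.mem_range_succ_iff.mpr (le_natDegree_of_ne_zero fun h => hk.pos.ne' ?_)
    rw [h, map_zero, zero_mul]
  rw [eval_eq_sum_range, w.map_sum_eq_of_lt mem_range, map_term]
  · exact hk.pos.ne'
  · intro j hj
    rw [map_term, map_term]
    exact hk j (by simpa using (Finset.mem_sdiff.mp hj).2)

end IsDominantTerm

variable {v : Valuation A Γ₀} {r : Γ₀}

theorem isDominantTerm_one : IsDominantTerm v r 1 0 :=
  fun j hj => by simp [coeff_one, hj]

theorem exists_isDominantTerm_X_sub_C {a : A} (ha : v a ≠ r) :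
    ∃ k, IsDominantTerm v r (X - C a) k := by
  have term_zero : v ((X - C a).coeff 0) * r ^ 0 = v a := by simp
  have term_one : v ((X - C a).coeff 1) * r ^ 1 = r := by simp
  have term_add_two : ∀ j, v ((X - C a).coeff (j + 2)) * r ^ (j + 2) = 0 := fun j => by
    simp [coeff_X]
  rcases ha.lt_or_gt with h | h
  · refine ⟨1, fun j hj => ?_⟩
    match j, hj with
    | 0, _ => rwa [term_one, term_zero]
    | j + 2, _ => rw [term_one, term_add_two]; exact zero_le.trans_lt h
  · refine ⟨0, fun j hj => ?_⟩
    match j, hj with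
    | 1, _ => rwa [term_one, term_zero]
    | j + 2, _ => rw [term_zero, term_add_two]; exact zero_le.trans_lt h

theorem exists_isDominantTerm_prod (hr : r ≠ 0) {ι : Type*} {s : Finset ι} {f : ι → A[X]}
    (h : ∀ i ∈ s, ∃ k, IsDominantTerm v r (f i) k) :
    ∃ k, IsDominantTerm v r (∏ i ∈ s, f i) k :=
  Finset.prod_induction f (fun P => ∃ k, IsDominantTerm v r P k)
    (fun _ _ ⟨_, hk⟩ ⟨_, hl⟩ => ⟨_, hk.mul hr hl⟩) ⟨0, isDominantTerm_one⟩ h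

end DominantTerm

section Conjugacy

variable {A B G Γ₀ : Type*} [CommRing A] [CommRing B] [Algebra B A] [Group G]
  [MulSemiringAction G A] [Algebra.IsInvariant B A G] [LinearOrderedCommGroupWithZero Γ₀]

theorem exists_apply_eq_apply_smul [Finite G] {v w : Valuation A Γ₀}
    (h : w.comap (algebraMap B A) = v.comap (algebraMap B A)) {a : A} (ha : w a ≠ 0) :
    ∃ g : G, w a = v (g • a) := by
  cases nonempty_fintype G
  by_contra! hne
  obtain ⟨k, hk⟩ : ∃ k, IsDominantTerm v (w a) (MulSemiringAction.charpoly G a) k :=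
    exists_isDominantTerm_prod ha fun g _ => exists_isDominantTerm_X_sub_C (hne g).symm
  refine hk.map_eval_ne_zero rfl (fun j => ?_) ?_
  · obtain ⟨b, hb⟩ := Algebra.IsInvariant.isInvariant (A := B) _
      (MulSemiringAction.smul_coeff_charpoly (G := G) a j)
    rw [← hb]
    exact DFunLike.congr_fun h b
  · rw [MulSemiringAction.eval_charpoly, map_zero]

theorem apply_eq_of_apply_pow_mul_eq {M : Type*} [Monoid M] {f φ : M →* Γ₀}
    (hf : ∀ m, f m ≠ 0) {b c : M} {m n : ℕ} (hmn : m ≠ n)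
    (hm : f (b ^ m * c) = φ (b ^ m * c)) (hn : f (b ^ n * c) = φ (b ^ n * c)) :
    f b = φ b ∧ f c = φ c := by
  wlog hlt : m < n generalizing m n
  · exact this hmn.symm hn hm (hmn.symm.lt_of_le (not_lt.mp hlt))
  have hb : f b = φ b := by
    have hsplit : b ^ n * c = b ^ (n - m) * (b ^ m * c) := by
      rw [← mul_assoc, ← pow_add, Nat.sub_add_cancel hlt.le]
    rw [hsplit, map_mul f, map_mul φ, ← hm, map_pow, map_pow] at hn
    exact (pow_left_inj₀ zero_le zero_le (Nat.sub_ne_zero_of_lt hlt)).mp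
      (mul_right_cancel₀ (hf _) hn)
  refine ⟨hb, ?_⟩
  rw [map_mul, map_mul, map_pow, map_pow, ← hb] at hm
  exact mul_left_cancel₀ (pow_ne_zero _ (hf b)) hm

theorem exists_eq_of_forall_exists_apply_eq {M ι : Type*} [Monoid M] [Finite ι]
    {f : M →* Γ₀} (hf : ∀ m, f m ≠ 0) {φ : ι → M →* Γ₀} (h : ∀ m, ∃ i, f m = φ i m) :
    ∃ i, f = φ i := by
  classical
  cases nonempty_fintype ι
  by_contra! hne
  suffices ∀ s : Finset ι, ∃ m, ∀ i ∈ s, f m ≠ φ i m by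
    obtain ⟨m, hm⟩ := this Finset.univ
    obtain ⟨i, hi⟩ := h m
    exact hm i (Finset.mem_univ i) hi
  intro s
  induction s using Finset.induction_on with
  | empty => exact ⟨1, by simp⟩
  | insert i₀ s _ ih =>
    obtain ⟨b, hb⟩ := ih
    obtain ⟨c, hc⟩ := DFunLike.ne_iff.mp (hne i₀)
    by_contra! hcover
    choose i hi heq using fun n : ℕ => hcover (b ^ n * c)
    obtain ⟨m, n, hmn, himn⟩ :=
      Finite.exists_ne_map_eq_of_infinite fun n => (⟨i n, hi n⟩ : (insert i₀ s : Finset ι))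
    rw [Subtype.mk.injEq] at himn
    obtain ⟨hb', hc'⟩ := apply_eq_of_apply_pow_mul_eq hf hmn (heq m) (himn ▸ heq n)
    rcases Finset.mem_insert.mp (hi m) with h₀ | hs
    · exact hc (h₀ ▸ hc')
    · exact hb _ hs hb'

theorem eq_of_comap_eq_of_eqOn_supp_compl [Algebra.IsIntegral B A] {v w : Valuation A Γ₀}
    (h : w.comap (algebraMap B A) = v.comap (algebraMap B A))
    (hvw : ∀ a ∉ w.supp, w a = v a) : w = v := by
  have supp_le : v.supp ≤ w.supp := fun a hv => by
    by_contra hw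
    exact hw ((hvw a hw).trans hv)
  have supp_eq : v.supp = w.supp := by
    refine eq_of_le_of_not_lt supp_le fun hlt => ?_
    refine (Ideal.IsIntegral.comap_lt_comap (R := B) hlt).ne ?_
    rw [← Valuation.comap_supp, ← Valuation.comap_supp, h]
  ext a
  by_cases ha : a ∈ w.supp
  · rw [(w.mem_supp_iff a).mp ha, (v.mem_supp_iff a).mp (supp_eq ▸ ha)]
  · exact hvw a ha

theorem exists_eq_comap_smul [Finite G] [SMulCommClass G B A] {v w : Valuation A Γ₀}
    (h : w.comap (algebraMap B A) = v.comap (algebraMap B A)) :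
    ∃ g : G, w = v.comap (MulSemiringAction.toRingHom G A g) := by
  have : Algebra.IsIntegral B A := Algebra.IsInvariant.isIntegral B A G
  let toMonoidHom (u : Valuation A Γ₀) : w.supp.primeCompl →* Γ₀ :=
    (u : A →* Γ₀).comp w.supp.primeCompl.subtype
  obtain ⟨g, hg⟩ := exists_eq_of_forall_exists_apply_eq (f := toMonoidHom w) (fun a => a.2)
    (φ := fun g : G => toMonoidHom (v.comap (MulSemiringAction.toRingHom G A g)))
    fun a => exists_apply_eq_apply_smul h a.2
  refine ⟨g, eq_of_comap_eq_of_eqOn_supp_compl (B := B) ?_ fun a ha =>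
    DFunLike.congr_fun hg ⟨a, ha⟩⟩
  rw [h]
  ext b
  simp only [Valuation.comap_apply, MulSemiringAction.toRingHom_apply, smul_algebraMap]

end Conjugacy

theorem restriction_bijection_orbits_seminorms_general
    (K : Type*) [SeminormedCommRing K] [IsUltrametricDist K]
    (A B : Type*) [CommRing A] [CommRing B] [Algebra K A] [Algebra K B] [Algebra B A]
    [IsScalarTower K B A] [FaithfulSMul B A]
    (G : Type*) [Group G] [Finite G] [MulSemiringAction G A] [SMulCommClass G B A]
    [Algebra.IsInvariant B A G] :
    (∀ y : MulRingSeminorm B, (∀ k : K, y (algebraMap K B k) = ‖k‖) →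
      ∃ x : MulRingSeminorm A, (∀ k : K, x (algebraMap K A k) = ‖k‖) ∧
        x.comp (algebraMap B A) = y) ∧
    (∀ x x' : MulRingSeminorm A,
      (∀ k : K, x (algebraMap K A k) = ‖k‖) →
      (∀ k : K, x' (algebraMap K A k) = ‖k‖) →
      (x.comp (algebraMap B A) = x'.comp (algebraMap B A) ↔
        ∃ g : G, ∀ a : A, x' a = x (g⁻¹ • a))) := by
  refine ⟨fun y hy => ?_, fun x x' hx hx' => ⟨fun h => ?_, ?_⟩⟩
  · have : Algebra.IsIntegral B A := Algebra.IsInvariant.isIntegral B A G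
    have hker : RingHom.ker (algebraMap B A) = ⊥ :=
      (RingHom.injective_iff_ker_eq_bot _).mp (FaithfulSMul.algebraMap_injective B A)
    obtain ⟨w, hw⟩ := exists_comap_algebraMap_eq_of_ker_le_supp (A := A)
      (v := valuationOfIsNonarchimedean (isNonarchimedean_of_extends_norm hy)) (hker ▸ bot_le)
    have w_algebraMap : ∀ b, (w (algebraMap B A b) : ℝ) = y b := fun b =>
      congrArg NNReal.toReal (DFunLike.congr_fun hw b)
    refine ⟨mulRingSeminormOfValuation w, fun k => ?_, DFunLike.ext _ _ w_algebraMap⟩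
    rw [IsScalarTower.algebraMap_apply K B A, ← hy]
    exact w_algebraMap _
  · obtain ⟨g, hg⟩ := exists_eq_comap_smul (B := B) (G := G)
      (v := valuationOfIsNonarchimedean (isNonarchimedean_of_extends_norm hx))
      (w := valuationOfIsNonarchimedean (isNonarchimedean_of_extends_norm hx'))
      (Valuation.ext fun b => NNReal.eq (DFunLike.congr_fun h b).symm)
    refine ⟨g⁻¹, fun a => ?_⟩
    rw [inv_inv]
    exact congrArg NNReal.toReal (DFunLike.congr_fun hg a)
  · rintro ⟨g, hg⟩
    refine DFunLike.ext _ _ fun b => ((hg _).trans ?_).symm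
    rw [smul_algebraMap]
    rfl

section InvariantSubalgebra

variable {K A G : Type*} [CommSemiring K]

instance [Semiring A] [Algebra K A] [Monoid G] [MulSemiringAction G A]
    {hGK : ∀ (g : G) (k : K), g • algebraMap K A k = algebraMap K A k} :
    SMulCommClass G (invariantSubalgebra K A G hGK) A where
  smul_comm g b a := by
    rw [Subalgebra.smul_def, Subalgebra.smul_def, smul_eq_mul, smul_eq_mul, smul_mul', b.2 g]

instance [CommRing A] [Algebra K A] [Group G] [MulSemiringAction G A]
    {hGK : ∀ (g : G) (k : K), g • algebraMap K A k = algebraMap K A k} :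
    Algebra.IsInvariant (invariantSubalgebra K A G hGK) A G where
  isInvariant a ha := ⟨⟨a, ha⟩, rfl⟩

end InvariantSubalgebra

/-- Let `K` be a field complete with respect to a non-Archimedean norm, `A` a
finitely generated commutative `K`-algebra, `G` a finite group acting on `A`
by `K`-algebra automorphisms, and `B` the subalgebra of `G`-invariant
elements.  Then restriction of seminorms from `A` to `B` induces a bijection
between `G`-orbits of multiplicative seminorms on `A` extending the norm of
`K` (where `(g • x)(a) = x(g⁻¹ • a)`) and multiplicative seminorms on `B`
extending the norm of `K`: the restriction map is surjective, and two
seminorms on `A` have the same restriction iff they lie in the same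
`G`-orbit. -/
theorem restriction_bijection_orbits_seminorms
    (K : Type*) [NormedField K] [CompleteSpace K]
    (hna : ∀ k k' : K, ‖k + k'‖ ≤ max ‖k‖ ‖k'‖)
    (A : Type*) [CommRing A] [Algebra K A] (hfg : Algebra.FiniteType K A)
    (G : Type*) [Group G] [Finite G] [MulSemiringAction G A]
    (hGK : ∀ (g : G) (k : K), g • (algebraMap K A k) = algebraMap K A k) :
    (∀ y : MulRingSeminorm (invariantSubalgebra K A G hGK),
      (∀ k : K, y (algebraMap K (invariantSubalgebra K A G hGK) k) = ‖k‖) →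
      ∃ x : MulRingSeminorm A, (∀ k : K, x (algebraMap K A k) = ‖k‖) ∧
        x.comp (invariantSubalgebra K A G hGK).toSubring.subtype = y) ∧
    (∀ x x' : MulRingSeminorm A,
      (∀ k : K, x (algebraMap K A k) = ‖k‖) →
      (∀ k : K, x' (algebraMap K A k) = ‖k‖) →
      (x.comp (invariantSubalgebra K A G hGK).toSubring.subtype =
          x'.comp (invariantSubalgebra K A G hGK).toSubring.subtype ↔
        ∃ g : G, ∀ a : A, x' a = x (g⁻¹ • a))) := by
  have := IsUltrametricDist.isUltrametricDist_of_forall_norm_add_le_max_norm hna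
  exact restriction_bijection_orbits_seminorms_general K A (invariantSubalgebra K A G hGK) G
end
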